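/- Let k ≥ 2 be an integer, N a positive integer, and q a complex number with 0 < |q| < 1. Then 1 + Σ_{m=1}^∞ q^m · Σ_{l=1}^{m} (f^k_{m,l}(q)/(q;q)_l) · (q^N;q)_l · (q^{1−N};q)_l = q^{k·N(N−1)}, where only finitely many terms of the double sum are nonzero (every term with l ≥ N vanishes, and f^k_{m,l}(q) = 0 for m > kl). -/

import Mathlib

/-!
Record a partition with parts at most `k` by the multiplicities `i₁, …, i_k` of its parts
`1, …, k`. The numbers `i₁` and `i₂` in the definition of `f^k_{m,l}` are chosen so that
`f^k_{m,l} / (q;q)_l` is a sum over the partitions of `m` into `l` parts at most `k`, weighted by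
`q^{n₂² + ⋯ + n_k²} / ((q;q)_{i₁} ⋯ (q;q)_{i_k})`, where `n_t = i_t + ⋯ + i_k` are the parts of the
conjugate partition. The double sum, its leading `1` included as the term `m = l = 0`, is therefore
the sum of
`q^{n₁ + ⋯ + n_k + n₂² + ⋯ + n_k²} (q^N;q)_{n₁} (q^{1-N};q)_{n₁} / ((q;q)_{i₁} ⋯ (q;q)_{i_k})`
over all `i₁, …, i_k ≥ 0`.

The terminating q-Chu–Vandermonde sum `∑ₛ qˢ (a;q)ₛ (q^{-M};q)ₛ / (q;q)ₛ = a^M` evaluates the sum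
over `i₁ = n₁ - n₂`: it reproduces the same multiple sum with one variable fewer, times
`q^{N(N-1)}`. This is one step of a Bailey chain, and `k` of them give `q^{kN(N-1)}`.
-/

open Finset

/-- Finite q-Pochhammer symbol `(a;q)_n`. -/
noncomputable def qPoch (a q : ℂ) (n : ℕ) : ℂ := ∏ j ∈ Finset.range n, (1 - a * q ^ j)

/-- `1/(q;q)_a` with the convention that it is `0` for `a < 0`. -/
noncomputable def qFactInv (q : ℂ) (a : ℤ) : ℂ :=
  if 0 ≤ a then (qPoch q q a.toNat)⁻¹ else 0

/-- The polynomial `f^k_{m,l}(q)`, a sum over nonnegative integers `i_3, …, i_k`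
    (here `i ⟨j⟩` represents `i_{j+3}`), with
    `i_2 := m − l − Σ_{j=3}^{k} (j−1)i_j`, `i_1 := 2l + Σ_{j=3}^{k} (j−2)i_j − m`, of
    `q^{Q(i_2,…,i_k)} (q;q)_l / ((q;q)_{i_k} ⋯ (q;q)_{i_3} (q;q)_{i_2} (q;q)_{i_1})`, where
    `Q(i_2,…,i_k) = i_k² + (i_k+i_{k−1})² + ⋯ + (i_k+⋯+i_2)²`. -/
noncomputable def fpoly (k : ℕ) (q : ℂ) (m l : ℤ) : ℂ :=
  ∑' i : Fin (k - 2) → ℕ,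
    q ^ ((∑ t ∈ Finset.range (k - 2),
            (∑ j ∈ Finset.univ.filter (fun j : Fin (k - 2) => t ≤ j.val), (i j : ℤ)) ^ 2)
         + ((m - l - ∑ j, ((j.val : ℤ) + 2) * (i j : ℤ)) + ∑ j, (i j : ℤ)) ^ 2)
    * qPoch q q l.toNat
    * (∏ j, qFactInv q (i j : ℤ))
    * qFactInv q (m - l - ∑ j, ((j.val : ℤ) + 2) * (i j : ℤ))
    * qFactInv q (2 * l + ∑ j, ((j.val : ℤ) + 1) * (i j : ℤ) - m)

section qPoch

variable {q : ℂ}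

@[simp]
lemma qPoch_zero (a q : ℂ) : qPoch a q 0 = 1 := by
  simp [qPoch]

lemma qPoch_succ (a q : ℂ) (n : ℕ) : qPoch a q (n + 1) = qPoch a q n * (1 - a * q ^ n) :=
  prod_range_succ _ n

lemma qPoch_succ_left (a q : ℂ) (n : ℕ) :
    qPoch a q (n + 1) = (1 - a) * qPoch (a * q) q n := by
  simp [qPoch, prod_range_succ', pow_succ', mul_assoc, mul_comm]

lemma qPoch_add (a q : ℂ) (r s : ℕ) :
    qPoch a q (r + s) = qPoch a q r * qPoch (a * q ^ r) q s := by
  simp [qPoch, prod_range_add, pow_add, mul_assoc]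

lemma qPoch_contiguous (c q : ℂ) (s : ℕ) :
    qPoch c q (s + 1) = qPoch (c * q) q (s + 1) - c * (1 - q ^ (s + 1)) * qPoch (c * q) q s := by
  rw [qPoch_succ_left, qPoch_succ]
  ring

lemma qPoch_self_ne_zero (hq : ¬IsOfFinOrder q) (n : ℕ) : qPoch q q n ≠ 0 := by
  refine prod_ne_zero_iff.mpr fun j _ h => hq ?_
  exact isOfFinOrder_iff_pow_eq_one.mpr ⟨j + 1, j.succ_pos, by linear_combination -h⟩

lemma qPoch_zpow_neg_eq_zero (hq0 : q ≠ 0) {M n : ℕ} (h : M < n) :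
    qPoch (q ^ (-(M : ℤ))) q n = 0 :=
  prod_eq_zero (mem_range.mpr h) (by simp [hq0])

lemma qFactInv_natCast (q : ℂ) (n : ℕ) : qFactInv q n = (qPoch q q n)⁻¹ := by
  simp [qFactInv]

lemma qFactInv_of_neg (q : ℂ) {a : ℤ} (h : a < 0) : qFactInv q a = 0 :=
  if_neg h.not_ge

end qPoch

section Summation

variable {q : ℂ}

/-- The `s`-th term of the basic hypergeometric series `₂φ₁(a, c; 0; q, q)`. For `c = q^{-M}` the
series terminates, and the q-Chu–Vandermonde formula evaluates it. -/
noncomputable def chuTerm (q a c : ℂ) (s : ℕ) : ℂ :=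
  q ^ s * (qPoch q q s)⁻¹ * (qPoch a q s * qPoch c q s)

lemma chuTerm_zero (q a c : ℂ) : chuTerm q a c 0 = 1 := by
  simp [chuTerm]

lemma chuTerm_zpow_neg_eq_zero (hq0 : q ≠ 0) (a : ℂ) {M s : ℕ} (h : M < s) :
    chuTerm q a (q ^ (-(M : ℤ))) s = 0 := by
  rw [chuTerm, qPoch_zpow_neg_eq_zero hq0 h, mul_zero, mul_zero]

lemma chuTerm_succ (hq : ¬IsOfFinOrder q) (a c : ℂ) (s : ℕ) :
    chuTerm q a c (s + 1) =
      chuTerm q a (c * q) (s + 1) - c * q * (1 - a) * chuTerm q (a * q) (c * q) s := by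
  have hs := qPoch_self_ne_zero hq (s + 1)
  have hsucc : qPoch q q (s + 1) = qPoch q q s * (1 - q ^ (s + 1)) := by
    rw [qPoch_succ, pow_succ']
  rw [hsucc] at hs
  have := left_ne_zero_of_mul hs
  have := right_ne_zero_of_mul hs
  simp only [chuTerm]
  rw [qPoch_contiguous c, qPoch_succ_left a, hsucc]
  field_simp
  ring

lemma sum_chuTerm_succ (hq : ¬IsOfFinOrder q) (a c : ℂ) (n : ℕ) :
    ∑ s ∈ range (n + 1), chuTerm q a c s =
      ∑ s ∈ range (n + 1), chuTerm q a (c * q) s -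
        c * q * (1 - a) * ∑ s ∈ range n, chuTerm q (a * q) (c * q) s := by
  simp only [sum_range_succ', chuTerm_succ hq a c, sum_sub_distrib, ← mul_sum, chuTerm_zero]
  ring

theorem sum_chuTerm (hq0 : q ≠ 0) (hq : ¬IsOfFinOrder q) (M : ℕ) (a : ℂ) :
    ∑ s ∈ range (M + 1), chuTerm q a (q ^ (-(M : ℤ))) s = a ^ M := by
  induction M generalizing a with
  | zero => simp [chuTerm_zero]
  | succ M ih =>
    have hc : q ^ (-((M + 1 : ℕ) : ℤ)) * q = q ^ (-(M : ℤ)) := by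
      rw [← zpow_add_one₀ hq0]
      congr 1
      push_cast
      ring
    have hlast : chuTerm q a (q ^ (-(M : ℤ))) (M + 1) = 0 :=
      chuTerm_zpow_neg_eq_zero hq0 a M.lt_succ_self
    have hcancel : q ^ (-(M : ℤ)) * q ^ M = 1 := by
      simp [hq0]
    calc ∑ s ∈ range (M + 1 + 1), chuTerm q a (q ^ (-((M + 1 : ℕ) : ℤ))) s
        = a ^ M - q ^ (-(M : ℤ)) * (1 - a) * (a * q) ^ M := by
          rw [sum_chuTerm_succ hq, hc, sum_range_succ, hlast, ih a, ih (a * q), add_zero]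
      _ = a ^ (M + 1) := by
          rw [mul_pow]
          linear_combination -(1 - a) * a ^ M * hcancel

/-- The product `(q^N;q)_n (q^{1-N};q)_n` for `N = M + 1`. -/
noncomputable def qPochPair (q : ℂ) (M n : ℕ) : ℂ :=
  qPoch (q ^ (M + 1)) q n * qPoch (q ^ (-(M : ℤ))) q n

lemma qPochPair_eq_zero (hq0 : q ≠ 0) {M n : ℕ} (h : M < n) : qPochPair q M n = 0 := by
  rw [qPochPair, qPoch_zpow_neg_eq_zero hq0 h, mul_zero]

lemma qPochPair_add (hq0 : q ≠ 0) (n r s : ℕ) :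
    qPochPair q (n + r) (s + r) =
      qPochPair q (n + r) r *
        (qPoch (q ^ (n + r + 1 + r)) q s * qPoch (q ^ (-(n : ℤ))) q s) := by
  have hshift : q ^ (-((n + r : ℕ) : ℤ)) * q ^ r = q ^ (-(n : ℤ)) := by
    rw [← zpow_natCast q r, ← zpow_add₀ hq0]
    congr 1
    push_cast
    ring
  rw [qPochPair, qPochPair, add_comm s r, qPoch_add, qPoch_add, hshift, ← pow_add]
  ring

/-- One step of the Bailey chain, with `s = i₁` and `r = n₂`: the factor `q ^ r` comes from
`n₁ = s + r`, and `q ^ r ^ 2` from the term `n₂²` of the exponent. -/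
theorem hasSum_qPochPair (hq0 : q ≠ 0) (hq : ¬IsOfFinOrder q) (M r : ℕ) :
    HasSum (fun s => q ^ (r + r ^ 2) * (q ^ s * (qPoch q q s)⁻¹ * qPochPair q M (s + r)))
      (q ^ (M * (M + 1)) * qPochPair q M r) := by
  rcases lt_or_ge M r with h | h
  · simp [qPochPair_eq_zero hq0 h, qPochPair_eq_zero hq0 (h.trans_le (Nat.le_add_left r _)),
      hasSum_zero]
  obtain ⟨n, rfl⟩ := Nat.exists_eq_add_of_le' h
  have hterm (s : ℕ) :
      q ^ (r + r ^ 2) * (q ^ s * (qPoch q q s)⁻¹ * qPochPair q (n + r) (s + r)) =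
        q ^ (r + r ^ 2) * qPochPair q (n + r) r *
          chuTerm q (q ^ (n + r + 1 + r)) (q ^ (-(n : ℤ))) s := by
    rw [qPochPair_add hq0, chuTerm]
    ring
  have hsum : HasSum (chuTerm q (q ^ (n + r + 1 + r)) (q ^ (-(n : ℤ))))
      ((q ^ (n + r + 1 + r)) ^ n) := by
    rw [← sum_chuTerm hq0 hq n]
    exact hasSum_sum_of_ne_finset_zero fun s hs =>
      chuTerm_zpow_neg_eq_zero hq0 _ (by simpa using hs)
  have hexp : q ^ ((n + r) * (n + r + 1)) * qPochPair q (n + r) r =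
      q ^ (r + r ^ 2) * qPochPair q (n + r) r * (q ^ (n + r + 1 + r)) ^ n := by
    ring
  simp only [hterm, hexp]
  exact hsum.mul_left _

end Summation

section Multiplicities

variable {d : ℕ}

/-- The number of parts of the partition in which `j + 1` occurs `i j` times. -/
def numParts (i : Fin d → ℕ) : ℕ := ∑ j, i j

/-- The sum of the parts of the partition in which `j + 1` occurs `i j` times. -/
def sumParts (i : Fin d → ℕ) : ℕ := ∑ j : Fin d, (j.val + 1) * i j

/-- The sum of the squares of the parts of the conjugate of the partition in which `j + 1` occurs
`i j` times. -/
def sumSqConj (i : Fin d → ℕ) : ℕ :=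
  ∑ t ∈ range d, (∑ j with t ≤ j.val, i j) ^ 2

lemma numParts_succ (i : Fin (d + 1) → ℕ) : numParts i = i 0 + numParts (Fin.tail i) :=
  Fin.sum_univ_succ i

lemma sumParts_succ (i : Fin (d + 1) → ℕ) :
    sumParts i = i 0 + numParts (Fin.tail i) + sumParts (Fin.tail i) := by
  simp only [sumParts, numParts, Fin.sum_univ_succ, Fin.tail, Fin.val_zero, Fin.val_succ, add_mul,
    one_mul, sum_add_distrib]
  ring

lemma sumSqConj_succ (i : Fin (d + 1) → ℕ) :
    sumSqConj i = numParts i ^ 2 + sumSqConj (Fin.tail i) := by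
  rw [sumSqConj, sum_range_succ', add_comm]
  simp [sumSqConj, numParts, sum_filter, Fin.sum_univ_succ, Fin.tail]

lemma numParts_le_sumParts (i : Fin d → ℕ) : numParts i ≤ sumParts i :=
  sum_le_sum fun j _ => Nat.le_mul_of_pos_left _ j.val.succ_pos

lemma sumParts_le_mul_numParts (i : Fin d → ℕ) : sumParts i ≤ d * numParts i := by
  rw [numParts, mul_sum]
  exact sum_le_sum fun j _ => Nat.mul_le_mul_right _ j.isLt

lemma sumParts_eq_zero_iff {i : Fin d → ℕ} : sumParts i = 0 ↔ i = 0 := by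
  simp [sumParts, funext_iff]

lemma finite_setOf_numParts_le (d M : ℕ) : {i : Fin d → ℕ | numParts i ≤ M}.Finite :=
  (Set.finite_Iic fun _ => M).subset fun _ hi _ =>
    (single_le_sum (fun _ _ => Nat.zero_le _) (mem_univ _)).trans hi

lemma eq_of_tail_tail_eq {i i' : Fin (d + 2) → ℕ} (hsum : sumParts i = sumParts i')
    (hnum : numParts i = numParts i') (htail : Fin.tail (Fin.tail i) = Fin.tail (Fin.tail i')) :
    i = i' := by
  simp only [sumParts_succ, numParts_succ, htail] at hsum hnum
  have h1 : Fin.tail i 0 = Fin.tail i' 0 := by omega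
  have h0 : i 0 = i' 0 := by omega
  rw [← Fin.cons_self_tail i, ← Fin.cons_self_tail i', ← Fin.cons_self_tail (Fin.tail i),
    ← Fin.cons_self_tail (Fin.tail i'), h0, h1, htail]

end Multiplicities

section Fpoly

variable {d : ℕ}

/-- The contribution `q^{n₂² + ⋯ + n_k²} / ((q;q)_{i₁} ⋯ (q;q)_{i_k})`, `k = d + 1`, of a partition
to `f^k_{m,l}(q) / (q;q)_l`. The multiplicity `i₁` is stored as `i 0`, and dropping it removes `n₁`
from the conjugate partition. -/
noncomputable def multTerm (q : ℂ) (i : Fin (d + 1) → ℕ) : ℂ :=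
  q ^ sumSqConj (Fin.tail i) * ∏ j, (qPoch q q (i j))⁻¹

lemma multTerm_zero (d : ℕ) (q : ℂ) : multTerm q (0 : Fin (d + 1) → ℕ) = 1 := by
  simp [multTerm, sumSqConj, Fin.tail]

/-- The summand of `f^{d+2}_{m,l}(q)` at `(i₃, …, i_{d+2})`. The arguments of the last two factors
are `i₂` and `i₁`; they may be negative. -/
noncomputable def fpolyTerm (q : ℂ) (m l : ℤ) (i : Fin d → ℕ) : ℂ :=
  q ^ ((sumSqConj i : ℤ) + (m - l - (sumParts i + numParts i) + numParts i) ^ 2)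
    * qPoch q q l.toNat
    * (∏ j, (qPoch q q (i j))⁻¹)
    * qFactInv q (m - l - (sumParts i + numParts i))
    * qFactInv q (2 * l + sumParts i - m)

lemma fpoly_eq_tsum_fpolyTerm (d : ℕ) (q : ℂ) (m l : ℤ) :
    fpoly (d + 2) q m l = ∑' i : Fin d → ℕ, fpolyTerm q m l i := by
  refine tsum_congr fun (i : Fin d → ℕ) => ?_
  have hnum : (numParts i : ℤ) = ∑ j, (i j : ℤ) := by
    simp [numParts]
  have hsum : (sumParts i : ℤ) = ∑ j, ((j.val : ℤ) + 1) * i j := by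
    simp [sumParts]
  have hconj : (sumSqConj i : ℤ) = ∑ t ∈ range d, (∑ j with t ≤ j.val, (i j : ℤ)) ^ 2 := by
    simp [sumSqConj]
  have hshift : (sumParts i : ℤ) + numParts i = ∑ j, ((j.val : ℤ) + 2) * i j := by
    rw [hsum, hnum, ← sum_add_distrib]
    exact sum_congr rfl fun j _ => by ring
  simp only [fpolyTerm, ← qFactInv_natCast]
  rw [hshift, hnum, hsum, hconj]
  rfl

lemma fpolyTerm_tail_tail (q : ℂ) (i : Fin (d + 2) → ℕ) :
    fpolyTerm q (sumParts i) (numParts i) (Fin.tail (Fin.tail i)) =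
      qPoch q q (numParts i) * multTerm q i := by
  have htwo : (sumParts i : ℤ) - numParts i -
      (sumParts (Fin.tail (Fin.tail i)) + numParts (Fin.tail (Fin.tail i))) = i 1 := by
    simp only [sumParts_succ, numParts_succ, Fin.tail, Fin.succ_zero_eq_one]
    push_cast
    ring
  have hone : 2 * (numParts i : ℤ) + sumParts (Fin.tail (Fin.tail i)) - sumParts i = i 0 := by
    simp only [sumParts_succ, numParts_succ]
    push_cast
    ring
  have hconj : (sumSqConj (Fin.tail (Fin.tail i)) : ℤ) +
      (i 1 + numParts (Fin.tail (Fin.tail i))) ^ 2 = sumSqConj (Fin.tail i) := by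
    rw [sumSqConj_succ (Fin.tail i), numParts_succ (Fin.tail i)]
    simp only [Fin.tail, Fin.succ_zero_eq_one]
    push_cast
    ring
  rw [fpolyTerm, htwo, hone, hconj]
  simp only [multTerm, zpow_natCast, Int.toNat_natCast, qFactInv_natCast, Fin.prod_univ_succ,
    Fin.tail, Fin.succ_zero_eq_one]
  ring

lemma exists_tail_tail_eq_of_fpolyTerm_ne_zero {q : ℂ} {m l : ℤ} {i : Fin d → ℕ}
    (h : fpolyTerm q m l i ≠ 0) :
    ∃ i' : Fin (d + 2) → ℕ,
      ((sumParts i' : ℤ) = m ∧ (numParts i' : ℤ) = l) ∧ Fin.tail (Fin.tail i') = i := by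
  have htwo : 0 ≤ m - l - (sumParts i + numParts i) := by
    by_contra! hneg
    exact h (by simp [fpolyTerm, qFactInv_of_neg q hneg])
  have hone : 0 ≤ 2 * l + sumParts i - m := by
    by_contra! hneg
    exact h (by simp [fpolyTerm, qFactInv_of_neg q hneg])
  lift m - l - (sumParts i + numParts i) to ℕ using htwo with b hb
  lift 2 * l + sumParts i - m to ℕ using hone with a ha
  refine ⟨Fin.cons a (Fin.cons b i), ?_, by simp only [Fin.tail_cons]⟩
  simp only [sumParts_succ, numParts_succ, Fin.cons_zero, Fin.tail_cons]
  omega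

theorem fpoly_eq_tsum_multTerm (d : ℕ) (q : ℂ) (m l : ℤ) :
    fpoly (d + 2) q m l = qPoch q q l.toNat *
      ∑' i : {i : Fin (d + 2) → ℕ // (sumParts i : ℤ) = m ∧ (numParts i : ℤ) = l},
        multTerm q i.1 := by
  let dropTwo (i : {i : Fin (d + 2) → ℕ // (sumParts i : ℤ) = m ∧ (numParts i : ℤ) = l}) :=
    Fin.tail (Fin.tail i.1)
  have hinj : Function.Injective dropTwo := by
    rintro ⟨i, hm, hl⟩ ⟨i', hm', hl'⟩ h
    have hsum : sumParts i = sumParts i' := by omega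
    have hnum : numParts i = numParts i' := by omega
    exact Subtype.ext (eq_of_tail_tail_eq hsum hnum h)
  have hsupp : Function.support (fpolyTerm (d := d) q m l) ⊆ Set.range dropTwo := by
    intro i hi
    obtain ⟨i', hi', rfl⟩ := exists_tail_tail_eq_of_fpolyTerm_ne_zero hi
    exact ⟨⟨i', hi'⟩, rfl⟩
  rw [fpoly_eq_tsum_fpolyTerm, ← hinj.tsum_eq hsupp, ← tsum_mul_left]
  refine tsum_congr ?_
  rintro ⟨i, rfl, rfl⟩
  exact fpolyTerm_tail_tail q i

lemma fpoly_eq_zero_of_forall {q : ℂ} {m l : ℤ}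
    (h : ∀ i : Fin (d + 2) → ℕ, (sumParts i : ℤ) = m → (numParts i : ℤ) ≠ l) :
    fpoly (d + 2) q m l = 0 := by
  have : IsEmpty {i : Fin (d + 2) → ℕ // (sumParts i : ℤ) = m ∧ (numParts i : ℤ) = l} :=
    ⟨fun i => h i.1 i.2.1 i.2.2⟩
  rw [fpoly_eq_tsum_multTerm, tsum_empty, mul_zero]

lemma fpoly_eq_zero_of_mul_lt (q : ℂ) {m l : ℤ} (h : ((d + 2 : ℕ) : ℤ) * l < m) :
    fpoly (d + 2) q m l = 0 := by
  refine fpoly_eq_zero_of_forall fun i hm hl => h.not_ge ?_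
  rw [← hm, ← hl]
  exact_mod_cast sumParts_le_mul_numParts i

lemma fpoly_eq_zero_of_lt (q : ℂ) {m l : ℤ} (h : m < l) : fpoly (d + 2) q m l = 0 := by
  refine fpoly_eq_zero_of_forall fun i hm hl => h.not_ge ?_
  rw [← hm, ← hl]
  exact_mod_cast numParts_le_sumParts i

lemma fpoly_zero_zero (d : ℕ) (q : ℂ) : fpoly (d + 2) q 0 0 = 1 := by
  rw [fpoly_eq_tsum_multTerm, tsum_eq_single ⟨0, by simp [sumParts, numParts]⟩]
  · simp [multTerm_zero]
  · rintro ⟨i, hi, hn⟩ hne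
    have hi0 : i = 0 := sumParts_eq_zero_iff.mp (by exact_mod_cast hi)
    exact absurd (Subtype.ext hi0) hne

end Fpoly

section BaileyChain

variable {q : ℂ} {d : ℕ}

/-- The summand `q^{n₁ + ⋯ + n_k + n₂² + ⋯ + n_k²} (q^N;q)_{n₁} (q^{1-N};q)_{n₁} / ∏ (q;q)_{i_j}` of
the multiple sum, for `k = d + 1` and `N = M + 1`. -/
noncomputable def chainTerm (q : ℂ) (M : ℕ) (i : Fin (d + 1) → ℕ) : ℂ :=
  q ^ sumParts i * multTerm q i * qPochPair q M (numParts i)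

lemma chainTerm_cons (q : ℂ) (M s : ℕ) (i : Fin (d + 1) → ℕ) :
    chainTerm q M (Fin.cons s i : Fin (d + 2) → ℕ) =
      q ^ sumParts i * multTerm q i * (q ^ (numParts i + numParts i ^ 2) *
        (q ^ s * (qPoch q q s)⁻¹ * qPochPair q M (s + numParts i))) := by
  simp only [chainTerm, multTerm, sumParts_succ (Fin.cons s i : Fin (d + 2) → ℕ),
    numParts_succ (Fin.cons s i : Fin (d + 2) → ℕ), Fin.cons_zero, Fin.tail_cons,
    sumSqConj_succ i, Fin.prod_univ_succ (n := d + 1), Fin.cons_succ]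
  ring

lemma summable_chainTerm (hq0 : q ≠ 0) (M : ℕ) :
    Summable (chainTerm q M : (Fin (d + 1) → ℕ) → ℂ) := by
  refine summable_of_hasFiniteSupport <| (finite_setOf_numParts_le (d + 1) M).subset fun i hi => ?_
  by_contra! h
  exact hi (by rw [chainTerm, qPochPair_eq_zero hq0 (not_le.mp h), mul_zero])

lemma tsum_chainTerm_succ (hq0 : q ≠ 0) (hq : ¬IsOfFinOrder q) (d M : ℕ) :
    ∑' i : Fin (d + 2) → ℕ, chainTerm q M i =
      q ^ (M * (M + 1)) * ∑' i : Fin (d + 1) → ℕ, chainTerm q M i := by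
  let e : (Fin (d + 1) → ℕ) × ℕ ≃ (Fin (d + 2) → ℕ) :=
    (Equiv.prodComm _ _).trans (Fin.consEquiv fun _ => ℕ)
  have hsum : Summable fun p => chainTerm q M (e p) :=
    e.summable_iff.mpr (summable_chainTerm hq0 M)
  rw [← e.tsum_eq, hsum.tsum_prod, ← tsum_mul_left]
  refine tsum_congr fun i => ?_
  calc ∑' s, chainTerm q M (e (i, s))
      = q ^ sumParts i * multTerm q i * (q ^ (M * (M + 1)) * qPochPair q M (numParts i)) := by
        rw [← (hasSum_qPochPair hq0 hq M (numParts i)).tsum_eq, ← tsum_mul_left]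
        exact tsum_congr fun s => chainTerm_cons q M s i
    _ = q ^ (M * (M + 1)) * chainTerm q M i := by
        rw [chainTerm]
        ring

theorem tsum_chainTerm (hq0 : q ≠ 0) (hq : ¬IsOfFinOrder q) (d M : ℕ) :
    ∑' i : Fin (d + 1) → ℕ, chainTerm q M i = q ^ ((d + 1) * (M * (M + 1))) := by
  induction d with
  | zero =>
    have hone (s : ℕ) : chainTerm q M ((Equiv.funUnique (Fin 1) ℕ).symm s) =
        q ^ s * (qPoch q q s)⁻¹ * qPochPair q M s := by
      simp [chainTerm, multTerm, sumParts, numParts, sumSqConj]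
    rw [← (Equiv.funUnique (Fin 1) ℕ).symm.tsum_eq, tsum_congr hone]
    simpa [qPochPair] using (hasSum_qPochPair hq0 hq M 0).tsum_eq
  | succ d ih =>
    rw [tsum_chainTerm_succ hq0 hq, ih]
    ring

end BaileyChain

section DoubleSum

variable {q : ℂ}

/-- The `(m, l)` term of the double sum, for `k = d + 2` and `N = M + 1`. -/
noncomputable def doubleTerm (q : ℂ) (d M m l : ℕ) : ℂ :=
  q ^ m * (fpoly (d + 2) q m l / qPoch q q l * qPochPair q M l)

lemma tsum_chainTerm_fiber (hq : ¬IsOfFinOrder q) (d M m l : ℕ) :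
    ∑' i : (fun i : Fin (d + 2) → ℕ => (sumParts i, numParts i)) ⁻¹' {(m, l)},
      chainTerm q M i.1 = doubleTerm q d M m l := by
  have hl := qPoch_self_ne_zero hq l
  let e : {i : Fin (d + 2) → ℕ // (sumParts i : ℤ) = m ∧ (numParts i : ℤ) = l} ≃
      (fun i : Fin (d + 2) → ℕ => (sumParts i, numParts i)) ⁻¹' {(m, l)} :=
    Equiv.subtypeEquivRight fun i => by simp
  rw [doubleTerm, fpoly_eq_tsum_multTerm, Int.toNat_natCast, mul_div_cancel_left₀ _ hl,
    ← tsum_mul_right, ← tsum_mul_left, ← e.tsum_eq]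
  refine tsum_congr ?_
  rintro ⟨i, hm, hn⟩
  obtain rfl : sumParts i = m := by exact_mod_cast hm
  obtain rfl : numParts i = l := by exact_mod_cast hn
  exact mul_assoc _ _ _

lemma hasSum_doubleTerm (hq0 : q ≠ 0) (hq : ¬IsOfFinOrder q) (d M : ℕ) :
    HasSum (fun p : ℕ × ℕ => doubleTerm q d M p.1 p.2) (q ^ ((d + 2) * (M * (M + 1)))) := by
  have hchain := (summable_chainTerm (d := d + 1) hq0 M).hasSum
  rw [tsum_chainTerm hq0 hq] at hchain
  simpa only [← tsum_chainTerm_fiber hq] using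
    hchain.tsum_fiberwise fun i => (sumParts i, numParts i)

lemma sum_range_doubleTerm (q : ℂ) (d M m : ℕ) :
    ∑ l ∈ range (m + 1), doubleTerm q d M m l =
      (if m = 0 then 1 else 0) + ∑ l ∈ Icc 1 m, doubleTerm q d M m l := by
  rw [sum_range_eq_add_Ico _ m.succ_pos]
  congr 1
  split_ifs with hm
  · simp [hm, doubleTerm, fpoly_zero_zero, qPochPair]
  · rw [doubleTerm, fpoly_eq_zero_of_mul_lt q (by simpa using Nat.pos_of_ne_zero hm)]
    simp

theorem hasSum_sum_Icc_doubleTerm (hq0 : q ≠ 0) (hq : ¬IsOfFinOrder q) (d M : ℕ) :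
    HasSum (fun m => ∑ l ∈ Icc 1 m, doubleTerm q d M m l)
      (q ^ ((d + 2) * (M * (M + 1))) - 1) := by
  have hrow (m : ℕ) :
      HasSum (doubleTerm q d M m) (∑ l ∈ range (m + 1), doubleTerm q d M m l) :=
    hasSum_sum_of_ne_finset_zero fun l hl => by
      have hml : (m : ℤ) < l := by simpa using hl
      simp [doubleTerm, fpoly_eq_zero_of_lt q hml]
  have hrows := ((hasSum_doubleTerm hq0 hq d M).prod_fiberwise hrow).sub (hasSum_ite_eq 0 1)
  simpa only [sum_range_doubleTerm, add_sub_cancel_left] using hrows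

end DoubleSum

theorem statement8_general (k : ℕ) (hk : 2 ≤ k) (N : ℕ) (hN : 1 ≤ N) (q : ℂ)
    (hq0 : q ≠ 0) (hq : ¬IsOfFinOrder q) :
    (∀ l : ℕ, N ≤ l → qPoch (q ^ (1 - (N : ℤ))) q l = 0) ∧
    (∀ m l : ℤ, (k : ℤ) * l < m → fpoly k q m l = 0) ∧
    1 + (∑' m : ℕ, q ^ m *
          ∑ l ∈ Finset.Icc 1 m, fpoly k q (m : ℤ) (l : ℤ) / qPoch q q l *
            qPoch (q ^ (N : ℤ)) q l * qPoch (q ^ (1 - (N : ℤ))) q l)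
      = q ^ (k * N * (N - 1)) := by
  obtain ⟨d, rfl⟩ := Nat.exists_eq_add_of_le' hk
  obtain ⟨M, rfl⟩ := Nat.exists_eq_add_of_le' hN
  have hneg : 1 - ((M + 1 : ℕ) : ℤ) = -M := by push_cast; ring
  rw [hneg]
  refine ⟨fun l hl => qPoch_zpow_neg_eq_zero hq0 hl,
    fun m l h => fpoly_eq_zero_of_mul_lt q h, ?_⟩
  have hsum := (hasSum_sum_Icc_doubleTerm hq0 hq d M).tsum_eq
  simp only [doubleTerm, qPochPair, ← mul_sum] at hsum
  simp only [zpow_natCast, mul_assoc, hsum, Nat.add_sub_cancel]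
  ring

/-- `1 + Σ_{m≥1} q^m Σ_{l=1}^{m} (f^k_{m,l}(q)/(q;q)_l) (q^N;q)_l (q^{1−N};q)_l = q^{kN(N−1)}`;
    moreover only finitely many terms are nonzero: every term with `l ≥ N` vanishes since
    `(q^{1−N};q)_l = 0`, and `f^k_{m,l}(q) = 0` for `m > kl`. -/
theorem statement8 (k : ℕ) (hk : 2 ≤ k) (N : ℕ) (hN : 1 ≤ N) (q : ℂ)
    (hq0 : 0 < ‖q‖) (hq1 : ‖q‖ < 1) :
    (∀ l : ℕ, N ≤ l → qPoch (q ^ (1 - (N : ℤ))) q l = 0) ∧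
    (∀ m l : ℤ, 0 ≤ l → (k : ℤ) * l < m → fpoly k q m l = 0) ∧
    1 + (∑' m : ℕ, q ^ m *
          ∑ l ∈ Finset.Icc 1 m, fpoly k q (m : ℤ) (l : ℤ) / qPoch q q l *
            qPoch (q ^ (N : ℤ)) q l * qPoch (q ^ (1 - (N : ℤ))) q l)
      = q ^ (k * N * (N - 1)) := by
  obtain ⟨hpoch, hfpoly, hsum⟩ := statement8_general k hk N hN q (norm_pos_iff.mp hq0)
    fun hfin => hq1.ne hfin.norm_eq_one
  exact ⟨hpoch, fun m l _ => hfpoly m l, hsum⟩
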